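/- Let C be a conjugation on the complex Hilbert space K, let S be a bounded normal operator on K with S♭ = S, and let E be the spectral measure of S on 𝔖 = σ(S). Then for every bounded Borel E-stem function f : 𝔖 → ℂ one has C∘f(S)∘C = f(S); consequently f(S) maps the real subspace H into H. -/

import Mathlib

open MeasureTheory
open scoped InnerProductSpace ComplexConjugate ENNReal

/-- A conjugation on a complex Hilbert space `K`. -/
structure IsConjugation {K : Type*} [NormedAddCommGroup K] [InnerProductSpace ℂ K]
    (C : K → K) : Prop where
  map_add : ∀ x y : K, C (x + y) = C x + C y
  map_smul : ∀ (a : ℂ) (x : K), C (a • x) = (conj a) • C x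
  invol : ∀ x : K, C (C x) = x
  inner_map : ∀ x y : K, ⟪C x, C y⟫_ℂ = conj ⟪x, y⟫_ℂ

/-- A (projection-valued) spectral measure on the Borel subsets of the set `𝔖 ⊆ ℂ`,
together with the family `μ` of its associated diagonal scalar measures
`μ ξ (A) = ⟨E(A)ξ, ξ⟩`. -/
structure IsSpectralMeasure {K : Type*} [NormedAddCommGroup K] [InnerProductSpace ℂ K]
    [CompleteSpace K] (𝔖 : Set ℂ) (E : Set ℂ → K →L[ℂ] K) (μ : K → Measure ℂ) : Prop where
  selfAdjoint : ∀ A : Set ℂ, MeasurableSet A → A ⊆ 𝔖 → IsSelfAdjoint (E A)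
  empty : E ∅ = 0
  univ : E 𝔖 = 1
  inter : ∀ A B : Set ℂ, MeasurableSet A → MeasurableSet B → A ⊆ 𝔖 → B ⊆ 𝔖 →
    E (A ∩ B) = E A ∘L E B
  countablyAdditive : ∀ (ξ η : K) (A : ℕ → Set ℂ), (∀ n, MeasurableSet (A n)) →
    (∀ n, A n ⊆ 𝔖) → Pairwise (Function.onFun Disjoint A) →
    HasSum (fun n => ⟪η, E (A n) ξ⟫_ℂ) ⟪η, E (⋃ n, A n) ξ⟫_ℂ
  measure_eq : ∀ (ξ : K) (A : Set ℂ), MeasurableSet A → A ⊆ 𝔖 →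
    μ ξ A = ENNReal.ofReal (⟪ξ, E A ξ⟫_ℂ).re
  measure_compl : ∀ ξ : K, μ ξ 𝔖ᶜ = 0

/-- The polarized integral `∫_𝔖 f dμ_{ξ,η}` of `f` against the complex measure
`μ_{ξ,η}(A) = ⟨E(A)ξ, η⟩`, expressed through the four diagonal (positive) measures. -/
noncomputable def specInt {K : Type*} [NormedAddCommGroup K] [InnerProductSpace ℂ K]
    (μ : K → Measure ℂ) (f : ℂ → ℂ) (ξ η : K) : ℂ :=
  (4 : ℂ)⁻¹ * (((∫ z, f z ∂(μ (ξ + η))) - ∫ z, f z ∂(μ (ξ - η)))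
    + Complex.I * ((∫ z, f z ∂(μ (ξ + Complex.I • η))) - ∫ z, f z ∂(μ (ξ - Complex.I • η))))

/-- The image `A^c = {conj z : z ∈ A}` of a subset of `ℂ` under complex conjugation. -/
def conjSet (A : Set ℂ) : Set ℂ := (fun z => conj z) '' A

/-!
The mixed moments of the diagonal measures are `∫ z ^ m * conj z ^ n dμ_ξ = ⟪S ^ n ξ, S ^ m ξ⟫`, and
since `𝔖` is compact they determine `μ_ξ` (Stone–Weierstrass). As `S` commutes with `C` and `C`
conjugates inner products, replacing `ξ` by `C ξ` conjugates every moment, so `μ_{Cξ}` is the image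
of `μ_ξ` under `z ↦ conj z`. Hence `C ∘ f(S) ∘ C = fᶜ(S)` with `fᶜ z = conj (f (conj z))`, and
`fᶜ = f` almost everywhere exactly when `f` is a stem function.

The moment formula rests on the multiplicativity of `g ↦ ∫ g dE`, which comes from every `∫ g dE`
commuting with the projections `E(A)`.
-/

open Filter Topology
open scoped BoundedContinuousFunction InnerProduct

section MomentProblem

variable {𝕜 : Type*} [RCLike 𝕜]

theorem measure_subtype_eq_of_forall_integral_pow_mul_conj_pow_eq {s : Set 𝕜} [CompactSpace s]
    {ρ σ : Measure s} [IsFiniteMeasure ρ] [IsFiniteMeasure σ]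
    (h : ∀ m n : ℕ, ∫ z : s, (z : 𝕜) ^ m * conj (z : 𝕜) ^ n ∂ρ
      = ∫ z : s, (z : 𝕜) ^ m * conj (z : 𝕜) ^ n ∂σ) :
    ρ = σ := by
  let ι : s →ᵇ 𝕜 := BoundedContinuousFunction.mkOfCompact ⟨Subtype.val, continuous_subtype_val⟩
  refine ext_of_forall_mem_subalgebra_integral_eq_of_polish (A := StarAlgebra.adjoin 𝕜 {ι})
    (fun x y hxy ↦ ⟨ι, ⟨_, ⟨ι, StarAlgebra.self_mem_adjoin_singleton 𝕜 ι, rfl⟩, rfl⟩,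
      Subtype.val_injective.ne hxy⟩) fun g hg ↦ ?_
  rw [← StarSubalgebra.mem_toSubalgebra, ← Subalgebra.mem_toSubmodule,
    StarAlgebra.adjoin_eq_span, Set.star_singleton, Set.singleton_union] at hg
  induction hg using Submodule.span_induction with
  | mem g hg =>
    obtain ⟨m, n, rfl⟩ := (Submonoid.mem_closure_pair _ _ _).1 hg
    exact h m n
  | zero => simp
  | add g₁ g₂ _ _ h₁ h₂ =>
    simp only [BoundedContinuousFunction.coe_add, Pi.add_apply]
    rw [integral_add (g₁.integrable _) (g₂.integrable _),
      integral_add (g₁.integrable _) (g₂.integrable _), h₁, h₂]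
  | smul c g _ h => simp only [BoundedContinuousFunction.coe_smul, integral_smul, h]

theorem measure_eq_of_forall_integral_pow_mul_conj_pow_eq {s : Set 𝕜} (hs : IsCompact s)
    {ρ σ : Measure 𝕜} [IsFiniteMeasure ρ] [IsFiniteMeasure σ]
    (hρ : ∀ᵐ z ∂ρ, z ∈ s) (hσ : ∀ᵐ z ∂σ, z ∈ s)
    (h : ∀ m n : ℕ, ∫ z, z ^ m * conj z ^ n ∂ρ = ∫ z, z ^ m * conj z ^ n ∂σ) :
    ρ = σ := by
  have : CompactSpace s := isCompact_iff_compactSpace.1 hs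
  have hsm := hs.measurableSet
  have hcomap : ρ.comap ((↑) : s → 𝕜) = σ.comap (↑) := by
    refine measure_subtype_eq_of_forall_integral_pow_mul_conj_pow_eq fun m n ↦ ?_
    rw [integral_subtype_comap hsm fun z ↦ z ^ m * conj z ^ n,
      integral_subtype_comap hsm fun z ↦ z ^ m * conj z ^ n,
      Measure.restrict_eq_self_of_ae_mem hρ, Measure.restrict_eq_self_of_ae_mem hσ, h]
  rw [← Measure.restrict_eq_self_of_ae_mem hρ, ← Measure.restrict_eq_self_of_ae_mem hσ,
    ← map_comap_subtype_coe hsm, ← map_comap_subtype_coe hsm, hcomap]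

end MomentProblem

section SpectralIntegral

variable {K : Type*} [NormedAddCommGroup K] [InnerProductSpace ℂ K]

/-- `T = ∫ g dE` in the weak sense, for the spectral measure `E` with diagonal measures `μ`.
Only the diagonal matrix elements are prescribed: they determine `T` by polarization. -/
def IsSpectralIntegral (μ : K → Measure ℂ) (g : ℂ → ℂ) (T : K →L[ℂ] K) : Prop :=
  ∀ ξ : K, ⟪ξ, T ξ⟫_ℂ = ∫ z, g z ∂μ ξ

variable {μ : K → Measure ℂ} {g h : ℂ → ℂ} {T U : K →L[ℂ] K}

namespace IsSpectralIntegral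

theorem inner_eq_specInt (hT : IsSpectralIntegral μ g T) (ξ η : K) :
    ⟪η, T ξ⟫_ℂ = specInt μ g ξ η := by
  have hpol := congrArg conj (inner_map_polarization' (T : K →ₗ[ℂ] K) ξ η)
  simp only [ContinuousLinearMap.coe_coe, map_div₀, map_add (starRingEnd ℂ),
    map_sub (starRingEnd ℂ), map_mul, inner_conj_symm,
    Complex.conj_I, map_ofNat] at hpol
  rw [hpol, specInt, ← hT, ← hT, ← hT, ← hT]
  ring

protected theorem unique (hT : IsSpectralIntegral μ g T) (hU : IsSpectralIntegral μ g U) : T = U :=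
  ContinuousLinearMap.ext fun ξ ↦ ext_inner_left ℂ fun η ↦ by
    rw [hT.inner_eq_specInt, hU.inner_eq_specInt]

protected theorem adjoint [CompleteSpace K] (hT : IsSpectralIntegral μ g T) :
    IsSpectralIntegral μ (fun z ↦ conj (g z)) (T†) := fun ξ ↦ by
  rw [ContinuousLinearMap.adjoint_inner_right, ← inner_conj_symm, hT, integral_conj]

protected theorem congr_ae (hT : IsSpectralIntegral μ g T) (hgh : ∀ ξ, g =ᵐ[μ ξ] h) :
    IsSpectralIntegral μ h T := fun ξ ↦ by
  rw [hT, integral_congr_ae (hgh ξ)]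

end IsSpectralIntegral

namespace IsSpectralMeasure

variable [CompleteSpace K] {𝔖 : Set ℂ} {E : Set ℂ → K →L[ℂ] K} {A B : Set ℂ}

theorem ae_mem (hE : IsSpectralMeasure 𝔖 E μ) (ξ : K) : ∀ᵐ z ∂μ ξ, z ∈ 𝔖 :=
  hE.measure_compl ξ

theorem ae_of_forall_mem_diff (hE : IsSpectralMeasure 𝔖 E μ) (hA : MeasurableSet A)
    (hA𝔖 : A ⊆ 𝔖) (hEA : E A = 0) {p : ℂ → Prop} (hp : ∀ z ∈ 𝔖 \ A, p z) (ξ : K) :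
    ∀ᵐ z ∂μ ξ, p z := by
  have hμA : μ ξ A = 0 := by simp [hE.measure_eq ξ A hA hA𝔖, hEA]
  filter_upwards [hE.ae_mem ξ, measure_eq_zero_iff_ae_notMem.1 hμA] with z hz hzA
  exact hp z ⟨hz, hzA⟩

theorem projection_projection (hE : IsSpectralMeasure 𝔖 E μ) (h𝔖 : MeasurableSet 𝔖)
    (hA : MeasurableSet A) (hB : MeasurableSet B) (ξ : K) :
    E (A ∩ 𝔖) (E (B ∩ 𝔖) ξ) = E (A ∩ B ∩ 𝔖) ξ := by
  rw [Set.inter_inter_distrib_right, hE.inter _ _ (hA.inter h𝔖) (hB.inter h𝔖)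
    Set.inter_subset_right Set.inter_subset_right, ContinuousLinearMap.comp_apply]

theorem inner_projection_left (hE : IsSpectralMeasure 𝔖 E μ) (h𝔖 : MeasurableSet 𝔖)
    (hA : MeasurableSet A) (ξ η : K) : ⟪E (A ∩ 𝔖) ξ, η⟫_ℂ = ⟪ξ, E (A ∩ 𝔖) η⟫_ℂ :=
  (hE.selfAdjoint _ (hA.inter h𝔖) Set.inter_subset_right).isSymmetric ξ η

theorem inner_projection_self (hE : IsSpectralMeasure 𝔖 E μ) (h𝔖 : MeasurableSet 𝔖)
    (hA : MeasurableSet A) (ξ : K) : ⟪ξ, E (A ∩ 𝔖) ξ⟫_ℂ = (‖E (A ∩ 𝔖) ξ‖ ^ 2 : ℝ) := by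
  have hidem := hE.projection_projection h𝔖 hA hA ξ
  rw [Set.inter_self] at hidem
  rw [← hidem, ← hE.inner_projection_left h𝔖 hA, hidem, inner_self_eq_norm_sq_to_K]
  simp

theorem measure_eq_enorm_projection_sq (hE : IsSpectralMeasure 𝔖 E μ) (h𝔖 : MeasurableSet 𝔖)
    (hA : MeasurableSet A) (ξ : K) : μ ξ A = ‖E (A ∩ 𝔖) ξ‖ₑ ^ 2 := by
  rw [← measure_inter_conull (hE.measure_compl ξ),
    hE.measure_eq ξ _ (hA.inter h𝔖) Set.inter_subset_right, hE.inner_projection_self h𝔖 hA,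
    Complex.ofReal_re, ENNReal.ofReal_pow (norm_nonneg _), ofReal_norm]

theorem isFiniteMeasure (hE : IsSpectralMeasure 𝔖 E μ) (h𝔖 : MeasurableSet 𝔖) (ξ : K) :
    IsFiniteMeasure (μ ξ) :=
  ⟨by rw [hE.measure_eq_enorm_projection_sq h𝔖 .univ]; exact ENNReal.pow_lt_top enorm_lt_top⟩

theorem inner_projection_self_eq_measureReal (hE : IsSpectralMeasure 𝔖 E μ) (h𝔖 : MeasurableSet 𝔖)
    (hA : MeasurableSet A) (ξ : K) : ⟪ξ, E (A ∩ 𝔖) ξ⟫_ℂ = (μ ξ).real A := by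
  rw [hE.inner_projection_self h𝔖 hA, Measure.real, hE.measure_eq_enorm_projection_sq h𝔖 hA,
    ENNReal.toReal_pow, toReal_enorm]

theorem measure_projection (hE : IsSpectralMeasure 𝔖 E μ) (h𝔖 : MeasurableSet 𝔖)
    (hA : MeasurableSet A) (ξ : K) : μ (E (A ∩ 𝔖) ξ) = (μ ξ).restrict A := by
  ext B hB
  rw [Measure.restrict_apply hB, hE.measure_eq_enorm_projection_sq h𝔖 hB,
    hE.measure_eq_enorm_projection_sq h𝔖 (hB.inter hA), hE.projection_projection h𝔖 hB hA]

theorem measure_smul (hE : IsSpectralMeasure 𝔖 E μ) (h𝔖 : MeasurableSet 𝔖) (c : ℂ) (ξ : K) :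
    μ (c • ξ) = ‖c‖ₑ ^ 2 • μ ξ := by
  ext B hB
  rw [Measure.smul_apply, hE.measure_eq_enorm_projection_sq h𝔖 hB,
    hE.measure_eq_enorm_projection_sq h𝔖 hB, map_smul, enorm_smul, mul_pow, smul_eq_mul]

theorem specInt_self (hE : IsSpectralMeasure 𝔖 E μ) (h𝔖 : MeasurableSet 𝔖) (g : ℂ → ℂ) (ξ : K) :
    specInt μ g ξ ξ = ∫ z, g z ∂μ ξ := by
  have hadd : μ (ξ + ξ) = (4 : ℝ≥0∞) • μ ξ := by
    rw [← two_smul ℂ ξ, hE.measure_smul h𝔖]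
    have h_two : ‖(2 : ℂ)‖ₑ = 2 := by simp [enorm_eq_nnnorm]
    norm_num [h_two]
  have hsub : μ (ξ - ξ) = 0 := by
    rw [sub_self, ← zero_smul ℂ (0 : K), hE.measure_smul h𝔖]
    simp
  have hI : μ (ξ - Complex.I • ξ) = μ (ξ + Complex.I • ξ) := by
    have : ξ - Complex.I • ξ = (-Complex.I) • (ξ + Complex.I • ξ) := by
      rw [smul_add, smul_smul, neg_mul, Complex.I_mul_I, neg_neg, one_smul, neg_smul]
      abel
    rw [this, hE.measure_smul h𝔖]
    simp [enorm_eq_nnnorm]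
  rw [specInt, hadd, hsub, hI, sub_self, integral_zero_measure, integral_smul_measure]
  simp

theorem isSpectralIntegral_iff (hE : IsSpectralMeasure 𝔖 E μ) (h𝔖 : MeasurableSet 𝔖) :
    IsSpectralIntegral μ g T ↔ ∀ ξ η : K, ⟪η, T ξ⟫_ℂ = specInt μ g ξ η :=
  ⟨fun hT ↦ hT.inner_eq_specInt, fun hT ξ ↦ by rw [hT, hE.specInt_self h𝔖]⟩

theorem isSpectralIntegral_indicator (hE : IsSpectralMeasure 𝔖 E μ) (h𝔖 : MeasurableSet 𝔖)
    (hA : MeasurableSet A) (c : ℂ) :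
    IsSpectralIntegral μ (A.indicator fun _ ↦ c) (c • E (A ∩ 𝔖)) := fun ξ ↦ by
  rw [integral_indicator_const c hA, smul_apply, inner_smul_right,
    hE.inner_projection_self_eq_measureReal h𝔖 hA, Complex.real_smul, mul_comm]

theorem isSpectralIntegral_one (hE : IsSpectralMeasure 𝔖 E μ) (h𝔖 : MeasurableSet 𝔖) :
    IsSpectralIntegral μ (fun _ ↦ 1) 1 := by
  simpa [hE.univ] using hE.isSpectralIntegral_indicator h𝔖 .univ 1

theorem projection_apply_projection (hE : IsSpectralMeasure 𝔖 E μ) (h𝔖 : MeasurableSet 𝔖)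
    (hA : MeasurableSet A) (hT : IsSpectralIntegral μ g T) (hg : ∀ ξ, Integrable g (μ ξ)) (ξ : K) :
    E (A ∩ 𝔖) (T (E (A ∩ 𝔖) ξ)) = T (E (A ∩ 𝔖) ξ) := by
  -- Splitting `∫ g dμ_ζ` over `A` and `Aᶜ` makes `T` block diagonal.
  have hblock : T = E (A ∩ 𝔖) ∘L T ∘L E (A ∩ 𝔖) + E (Aᶜ ∩ 𝔖) ∘L T ∘L E (Aᶜ ∩ 𝔖) := by
    refine hT.unique fun ζ ↦ ?_
    simp only [add_apply, inner_add_right, ContinuousLinearMap.comp_apply]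
    rw [← hE.inner_projection_left h𝔖 hA, ← hE.inner_projection_left h𝔖 hA.compl, hT, hT,
      hE.measure_projection h𝔖 hA, hE.measure_projection h𝔖 hA.compl,
      integral_add_compl hA (hg ζ)]
  conv_rhs => rw [hblock]
  simp [hE.projection_projection h𝔖 hA hA, hE.projection_projection h𝔖 hA.compl hA, hE.empty]

theorem inner_apply_projection_eq_setIntegral (hE : IsSpectralMeasure 𝔖 E μ)
    (h𝔖 : MeasurableSet 𝔖) (hA : MeasurableSet A) (hT : IsSpectralIntegral μ g T)
    (hg : ∀ ξ, Integrable g (μ ξ)) (ξ : K) :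
    ⟪ξ, T (E (A ∩ 𝔖) ξ)⟫_ℂ = ∫ z in A, g z ∂μ ξ := by
  rw [← hE.projection_apply_projection h𝔖 hA hT hg, ← hE.inner_projection_left h𝔖 hA, hT,
    hE.measure_projection h𝔖 hA]

theorem specInt_adjoint_indicator (hE : IsSpectralMeasure 𝔖 E μ) (h𝔖 : MeasurableSet 𝔖)
    (hA : MeasurableSet A) (hT : IsSpectralIntegral μ g T) (hg : ∀ ξ, Integrable g (μ ξ)) (c : ℂ)
    (ξ : K) :
    specInt μ (A.indicator fun _ ↦ c) ξ ((T†) ξ) = ∫ z, g z * A.indicator (fun _ ↦ c) z ∂μ ξ :=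
  calc specInt μ (A.indicator fun _ ↦ c) ξ ((T†) ξ)
    _ = ⟪ξ, T ((c • E (A ∩ 𝔖)) ξ)⟫_ℂ := by
      rw [← (hE.isSpectralIntegral_indicator h𝔖 hA c).inner_eq_specInt,
        ContinuousLinearMap.adjoint_inner_left]
    _ = c * ∫ z in A, g z ∂μ ξ := by
      rw [smul_apply, map_smul, inner_smul_right,
        hE.inner_apply_projection_eq_setIntegral h𝔖 hA hT hg]
    _ = ∫ z, g z * A.indicator (fun _ ↦ c) z ∂μ ξ := by
      simp only [← Set.indicator_mul_right, integral_indicator hA, integral_mul_const, mul_comm c]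

theorem specInt_adjoint_simpleFunc (hE : IsSpectralMeasure 𝔖 E μ) (h𝔖 : MeasurableSet 𝔖)
    (hT : IsSpectralIntegral μ g T) (hg : ∀ ξ, Integrable g (μ ξ)) (k : SimpleFunc ℂ ℂ) (ξ : K) :
    specInt μ k ξ ((T†) ξ) = ∫ z, g z * k z ∂μ ξ := by
  have hfin := hE.isFiniteMeasure h𝔖
  have hk (k : SimpleFunc ℂ ℂ) (ζ : K) : Integrable k (μ ζ) := k.integrable_of_isFiniteMeasure
  have hgk (k : SimpleFunc ℂ ℂ) : Integrable (fun z ↦ g z * k z) (μ ξ) := by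
    obtain ⟨c, hc⟩ := k.exists_forall_norm_le
    exact (hg ξ).mul_bdd k.aestronglyMeasurable (.of_forall hc)
  induction k using SimpleFunc.induction with
  | @const c A hA =>
    classical
    rw [SimpleFunc.coe_piecewise, SimpleFunc.coe_const, SimpleFunc.coe_const, Function.const_zero,
      Set.piecewise_eq_indicator]
    exact hE.specInt_adjoint_indicator h𝔖 hA hT hg c ξ
  | @add k₁ k₂ _ h₁ h₂ =>
    simp only [SimpleFunc.coe_add, Pi.add_apply, mul_add]
    rw [integral_add (hgk k₁) (hgk k₂), ← h₁, ← h₂]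
    simp only [specInt, Pi.add_apply, integral_add (hk k₁ _) (hk k₂ _)]
    ring

theorem tendsto_specInt_of_bounded (hE : IsSpectralMeasure 𝔖 E μ) (h𝔖 : MeasurableSet 𝔖)
    {k : ℕ → ℂ → ℂ} (hk : ∀ n, Measurable (k n)) {d : ℝ} (hd : ∀ n, ∀ z ∈ 𝔖, ‖k n z‖ ≤ d)
    (hlim : ∀ z ∈ 𝔖, Tendsto (k · z) atTop (𝓝 (h z))) (ξ η : K) :
    Tendsto (fun n ↦ specInt μ (k n) ξ η) atTop (𝓝 (specInt μ h ξ η)) := by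
  have hfin := hE.isFiniteMeasure h𝔖
  have hint (ζ : K) : Tendsto (fun n ↦ ∫ z, k n z ∂μ ζ) atTop (𝓝 (∫ z, h z ∂μ ζ)) :=
    tendsto_integral_of_dominated_convergence (fun _ ↦ d)
      (fun n ↦ (hk n).aestronglyMeasurable) (integrable_const _)
      (fun n ↦ (hE.ae_mem ζ).mono (hd n)) ((hE.ae_mem ζ).mono hlim)
  exact (((hint _).sub (hint _)).add (((hint _).sub (hint _)).const_mul _)).const_mul _

theorem specInt_adjoint (hE : IsSpectralMeasure 𝔖 E μ) (h𝔖 : MeasurableSet 𝔖)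
    (hT : IsSpectralIntegral μ g T) (hg : ∀ ξ, Integrable g (μ ξ)) (hh : Measurable h) {d : ℝ}
    (hd : ∀ z ∈ 𝔖, ‖h z‖ ≤ d) (ξ : K) :
    specInt μ h ξ ((T†) ξ) = ∫ z, g z * h z ∂μ ξ := by
  wlog hd₀ : 0 ≤ d generalizing d
  · exact this (fun z hz ↦ (hd z hz).trans (le_max_left d 0)) (le_max_right d 0)
  let k := hh.stronglyMeasurable.approxBounded d
  have hk_le (n : ℕ) (z : ℂ) : ‖k n z‖ ≤ d := hh.stronglyMeasurable.norm_approxBounded_le hd₀ n z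
  have hk_lim (z : ℂ) (hz : z ∈ 𝔖) : Tendsto (k · z) atTop (𝓝 (h z)) :=
    hh.stronglyMeasurable.tendsto_approxBounded_of_norm_le (hd z hz)
  have hspec : Tendsto (fun n ↦ specInt μ (k n) ξ ((T†) ξ)) atTop (𝓝 (specInt μ h ξ ((T†) ξ))) :=
    hE.tendsto_specInt_of_bounded h𝔖 (fun n ↦ (k n).measurable) (fun n z _ ↦ hk_le n z) hk_lim _ _
  have hmul : Tendsto (fun n ↦ ∫ z, g z * k n z ∂μ ξ) atTop (𝓝 (∫ z, g z * h z ∂μ ξ)) := by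
    refine tendsto_integral_of_dominated_convergence (fun z ↦ ‖g z‖ * d)
      (fun n ↦ (hg ξ).aestronglyMeasurable.mul (k n).aestronglyMeasurable)
      ((hg ξ).norm.mul_const d) (fun n ↦ .of_forall fun z ↦ ?_)
      ((hE.ae_mem ξ).mono fun z hz ↦ (hk_lim z hz).const_mul _)
    rw [norm_mul]
    gcongr
    exact hk_le n z
  refine tendsto_nhds_unique hspec ?_
  simpa only [hE.specInt_adjoint_simpleFunc h𝔖 hT hg] using hmul

theorem isSpectralIntegral_comp (hE : IsSpectralMeasure 𝔖 E μ) (h𝔖 : MeasurableSet 𝔖)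
    (hT : IsSpectralIntegral μ g T) (hU : IsSpectralIntegral μ h U)
    (hg : ∀ ξ, Integrable g (μ ξ)) (hh : Measurable h) {d : ℝ} (hd : ∀ z ∈ 𝔖, ‖h z‖ ≤ d) :
    IsSpectralIntegral μ (fun z ↦ g z * h z) (T ∘L U) := fun ξ ↦ by
  rw [ContinuousLinearMap.comp_apply, ← ContinuousLinearMap.adjoint_inner_left,
    hU.inner_eq_specInt, hE.specInt_adjoint h𝔖 hT hg hh hd]

section Compact

variable {S : K →L[ℂ] K}

theorem integrable_of_continuous (hE : IsSpectralMeasure 𝔖 E μ) (h𝔖 : IsCompact 𝔖)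
    (hg : Continuous g) (ξ : K) : Integrable g (μ ξ) := by
  have := hE.isFiniteMeasure h𝔖.measurableSet ξ
  obtain ⟨c, hc⟩ := h𝔖.exists_bound_of_continuousOn hg.continuousOn
  exact .of_bound hg.aestronglyMeasurable c ((hE.ae_mem ξ).mono hc)

theorem isSpectralIntegral_comp_of_continuous (hE : IsSpectralMeasure 𝔖 E μ) (h𝔖 : IsCompact 𝔖)
    (hT : IsSpectralIntegral μ g T) (hU : IsSpectralIntegral μ h U)
    (hg : Continuous g) (hh : Continuous h) :
    IsSpectralIntegral μ (fun z ↦ g z * h z) (T ∘L U) := by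
  obtain ⟨d, hd⟩ := h𝔖.exists_bound_of_continuousOn hh.continuousOn
  exact hE.isSpectralIntegral_comp h𝔖.measurableSet hT hU
    (hE.integrable_of_continuous h𝔖 hg) hh.measurable hd

theorem isSpectralIntegral_pow (hE : IsSpectralMeasure 𝔖 E μ) (h𝔖 : IsCompact 𝔖)
    (hT : IsSpectralIntegral μ g T) (hg : Continuous g) (n : ℕ) :
    IsSpectralIntegral μ (fun z ↦ g z ^ n) (T ^ n) := by
  induction n with
  | zero => simpa only [pow_zero] using hE.isSpectralIntegral_one h𝔖.measurableSet
  | succ n ih =>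
    simpa only [pow_succ, ContinuousLinearMap.mul_def] using
      hE.isSpectralIntegral_comp_of_continuous h𝔖 ih hT (hg.pow n) hg

theorem integral_pow_mul_conj_pow (hE : IsSpectralMeasure 𝔖 E μ) (h𝔖 : IsCompact 𝔖)
    (hS : IsSpectralIntegral μ (fun z ↦ z) S) (m n : ℕ) (ξ : K) :
    ∫ z, z ^ m * conj z ^ n ∂μ ξ = ⟪(S ^ n) ξ, (S ^ m) ξ⟫_ℂ := by
  have hpow := hE.isSpectralIntegral_pow h𝔖 hS continuous_id
  have hmul := hE.isSpectralIntegral_comp_of_continuous h𝔖 (hpow n).adjoint (hpow m)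
    (by fun_prop) (by fun_prop) ξ
  simpa [ContinuousLinearMap.adjoint_inner_right, mul_comm] using hmul.symm

end Compact

end IsSpectralMeasure

end SpectralIntegral

section Conjugation

variable {K : Type*} [NormedAddCommGroup K] [InnerProductSpace ℂ K] {C : K → K}

namespace IsConjugation

theorem norm_map (hC : IsConjugation C) (ξ : K) : ‖C ξ‖ = ‖ξ‖ := by
  rw [norm_eq_sqrt_re_inner (𝕜 := ℂ), norm_eq_sqrt_re_inner (𝕜 := ℂ) ξ, hC.inner_map,
    RCLike.conj_re]

theorem inner_map_right (hC : IsConjugation C) (ξ η : K) : ⟪ξ, C η⟫_ℂ = conj ⟪C ξ, η⟫_ℂ := by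
  rw [← hC.inner_map, hC.invol]

/-- The operator `T♭ = C ∘ T ∘ C`. -/
noncomputable def flat (hC : IsConjugation C) (T : K →L[ℂ] K) : K →L[ℂ] K :=
  LinearMap.mkContinuous
    { toFun := fun ξ ↦ C (T (C ξ))
      map_add' := fun ξ η ↦ by rw [hC.map_add, T.map_add, hC.map_add]
      map_smul' := fun c ξ ↦ by
        rw [hC.map_smul, T.map_smul, hC.map_smul, Complex.conj_conj, RingHom.id_apply] }
    ‖T‖ fun ξ ↦ by simpa [hC.norm_map] using T.le_opNorm (C ξ)

theorem flat_apply (hC : IsConjugation C) (T : K →L[ℂ] K) (ξ : K) :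
    hC.flat T ξ = C (T (C ξ)) := rfl

theorem pow_apply_of_flat_eq (hC : IsConjugation C) {T : K →L[ℂ] K} (hT : hC.flat T = T) (n : ℕ)
    (ξ : K) : (T ^ n) (C ξ) = C ((T ^ n) ξ) := by
  have hcomm : Function.Commute T C := fun ζ ↦ by
    conv_rhs => rw [← hT, flat_apply, hC.invol]
  simpa using hcomm.iterate_left n ξ

variable {μ : K → Measure ℂ}

theorem measure_apply_eq_map_conj [CompleteSpace K] (hC : IsConjugation C) {𝔖 : Set ℂ}
    {E : Set ℂ → K →L[ℂ] K} (hE : IsSpectralMeasure 𝔖 E μ) (h𝔖 : IsCompact 𝔖) {S : K →L[ℂ] K}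
    (hS : IsSpectralIntegral μ (fun z ↦ z) S) (hflat : hC.flat S = S) (ξ : K) :
    μ (C ξ) = (μ ξ).map (fun z ↦ conj z) := by
  have hfin := hE.isFiniteMeasure h𝔖.measurableSet
  have hconj : Measurable fun z : ℂ ↦ conj z := Complex.continuous_conj.measurable
  have := Measure.isFiniteMeasure_map (μ ξ) fun z ↦ conj z
  have hcompact : IsCompact (conjSet 𝔖) := h𝔖.image Complex.continuous_conj
  have hsupp : ∀ᵐ z ∂(μ ξ).map (fun z ↦ conj z), z ∈ conjSet 𝔖 :=
    (ae_map_iff hconj.aemeasurable hcompact.measurableSet).2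
      ((hE.ae_mem ξ).mono fun _ ↦ Set.mem_image_of_mem _)
  refine measure_eq_of_forall_integral_pow_mul_conj_pow_eq
    (h𝔖.union hcompact) ((hE.ae_mem _).mono fun _ ↦ .inl)
    (hsupp.mono fun _ ↦ .inr) fun m n ↦ ?_
  calc ∫ z, z ^ m * conj z ^ n ∂μ (C ξ)
    _ = ⟪C ((S ^ n) ξ), C ((S ^ m) ξ)⟫_ℂ := by
      rw [hE.integral_pow_mul_conj_pow h𝔖 hS, hC.pow_apply_of_flat_eq hflat,
        hC.pow_apply_of_flat_eq hflat]
    _ = ∫ z, z ^ n * conj z ^ m ∂μ ξ := by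
      rw [hC.inner_map, inner_conj_symm, hE.integral_pow_mul_conj_pow h𝔖 hS]
    _ = ∫ z, z ^ m * conj z ^ n ∂(μ ξ).map (fun z ↦ conj z) := by
      rw [integral_map hconj.aemeasurable (by fun_prop)]
      simp [mul_comm]

theorem isSpectralIntegral_flat (hC : IsConjugation C) {f : ℂ → ℂ} {T : K →L[ℂ] K}
    (hμ : ∀ ξ, μ (C ξ) = (μ ξ).map (fun z ↦ conj z)) (hf : Measurable f)
    (hT : IsSpectralIntegral μ f T) :
    IsSpectralIntegral μ (fun z ↦ conj (f (conj z))) (hC.flat T) := fun ξ ↦ by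
  rw [flat_apply, hC.inner_map_right, hT, hμ, integral_map
    Complex.continuous_conj.measurable.aemeasurable hf.aestronglyMeasurable, integral_conj]

end IsConjugation

end Conjugation

/-- Let `C` be a conjugation on `K`, `S` a bounded normal operator with
`S♭ = S`, and `E` (with diagonal scalar measures `μ`) the spectral measure of `S` on
`𝔖 = σ(S)`.  Then for every bounded Borel `E`-stem function `f` one has
`C ∘ f(S) ∘ C = f(S)`; consequently `f(S)` maps the real subspace `H` into itself. -/
theorem stem_functionalCalculus_conj_invariant
    {K : Type*} [NormedAddCommGroup K] [InnerProductSpace ℂ K] [CompleteSpace K]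
    {C : K → K} (hC : IsConjugation C) (S : K →L[ℂ] K)
    (hnormal : (ContinuousLinearMap.adjoint S) ∘L S = S ∘L (ContinuousLinearMap.adjoint S))
    (hflat : ∀ ξ : K, C (S (C ξ)) = S ξ)
    (E : Set ℂ → K →L[ℂ] K) (μ : K → Measure ℂ)
    (hE : IsSpectralMeasure (spectrum ℂ S) E μ)
    (hSE : ∀ ξ η : K, ⟪η, S ξ⟫_ℂ = specInt μ (fun z => z) ξ η)
    (f : ℂ → ℂ) (hfmeas : Measurable f)
    (hfbdd : ∃ M : ℝ, ∀ z ∈ spectrum ℂ S, ‖f z‖ ≤ M)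
    (hfstem : ∃ N : Set ℂ, MeasurableSet N ∧ N ⊆ spectrum ℂ S ∧ E N = 0 ∧
      ∀ z ∈ spectrum ℂ S \ N, f (conj z) = conj (f z))
    (Φf : K →L[ℂ] K) (hΦf : ∀ ξ η : K, ⟪η, Φf ξ⟫_ℂ = specInt μ f ξ η) :
    (∀ ξ : K, C (Φf (C ξ)) = Φf ξ) ∧ (∀ u : K, C u = u → C (Φf u) = Φf u) := by
  have h𝔖 : IsCompact (spectrum ℂ S) := spectrum.isCompact S
  have hS : IsSpectralIntegral μ (fun z ↦ z) S :=
    (hE.isSpectralIntegral_iff h𝔖.measurableSet).2 hSE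
  have hΦ : IsSpectralIntegral μ f Φf := (hE.isSpectralIntegral_iff h𝔖.measurableSet).2 hΦf
  have hμ : ∀ ξ, μ (C ξ) = (μ ξ).map fun z ↦ conj z :=
    hC.measure_apply_eq_map_conj hE h𝔖 hS (ContinuousLinearMap.ext hflat)
  obtain ⟨N, hN, hN𝔖, hEN, hfN⟩ := hfstem
  have hstem : ∀ ξ, (fun z ↦ conj (f (conj z))) =ᵐ[μ ξ] f := fun ξ ↦
    hE.ae_of_forall_mem_diff hN hN𝔖 hEN (fun z hz ↦ by simp only [hfN z hz, Complex.conj_conj]) ξ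
  have hΦflat : hC.flat Φf = Φf :=
    ((hC.isSpectralIntegral_flat hμ hfmeas hΦ).congr_ae hstem).unique hΦ
  have hinv : ∀ ξ, C (Φf (C ξ)) = Φf ξ := fun ξ ↦ DFunLike.congr_fun hΦflat ξ
  exact ⟨hinv, fun u hu ↦ by simpa only [hu] using hinv u⟩
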